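/- Let α > 0, 0 < λ < μ, and β > 0 satisfy 2α/λ² < β/μ². Then there exists a unique T* > 0 such that α/(λ²(1 − e^{−2αT*})) + α/λ² = β/(μ²(1 − e^{−2βT*})); moreover α/(λ²(1 − e^{−2αT})) + α/λ² > β/(μ²(1 − e^{−2βT})) for 0 < T < T*, and α/(λ²(1 − e^{−2αT})) + α/λ² < β/(μ²(1 − e^{−2βT})) for T > T*. -/

import Mathlib

/-!
The function `T ↦ 1 / (1 - exp (-2 a T))` has derivative `-a / (2 sinh (a T) ^ 2)`, so the
difference of the two sides has derivative
`(β ^ 2 / (mu ^ 2 sinh (β T) ^ 2) - α ^ 2 / (lam ^ 2 sinh (α T) ^ 2)) / 2`. The gap hypothesis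
forces `α < β`, and `sinh s / s` is increasing (`mul_sinh_le_mul_sinh`), hence this is negative and
the difference is strictly decreasing on `T > 0` (`strictAntiOn_gap`). The elementary bounds
`max 1 (1 / x) ≤ 1 / (1 - exp (-x)) ≤ 1 / x + 1` for `x > 0` give explicit points where the difference is positive and
negative, and the intermediate value theorem gives the zero.
-/

theorem one_sub_exp_pos {a T : ℝ} (ha : 0 < a) (hT : 0 < T) :
    0 < 1 - Real.exp (-2 * a * T) := by
  have h : Real.exp (-2 * a * T) < 1 := Real.exp_lt_one_iff.mpr (by nlinarith [mul_pos ha hT])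
  linarith

theorem inv_one_sub_exp_lower {a T : ℝ} (ha : 0 < a) (hT : 0 < T) :
    1 / (2 * a * T) ≤ 1 / (1 - Real.exp (-2 * a * T)) := by
  have h := Real.add_one_le_exp (-2 * a * T)
  exact one_div_le_one_div_of_le (one_sub_exp_pos ha hT) (by linarith)

theorem one_le_inv_one_sub_exp {a T : ℝ} (ha : 0 < a) (hT : 0 < T) :
    1 ≤ 1 / (1 - Real.exp (-2 * a * T)) := by
  rw [le_div_iff₀ (one_sub_exp_pos ha hT)]
  linarith [Real.exp_pos (-2 * a * T)]

theorem inv_one_sub_exp_upper {a T : ℝ} (ha : 0 < a) (hT : 0 < T) :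
    1 / (1 - Real.exp (-2 * a * T)) ≤ 1 / (2 * a * T) + 1 := by
  have hx : 0 < 2 * a * T := by positivity
  have h := Real.add_one_le_exp (2 * a * T)
  have he : Real.exp (-2 * a * T) * Real.exp (2 * a * T) = 1 := by
    rw [← Real.exp_add, ← Real.exp_zero]
    congr 1
    ring
  have hp := Real.exp_pos (-2 * a * T)
  rw [div_le_iff₀ (one_sub_exp_pos ha hT)]
  have h2 : Real.exp (-2 * a * T) * (2 * a * T + 1) ≤ 1 := by nlinarith
  have h3 : (1 / (2 * a * T) + 1) * (1 - Real.exp (-2 * a * T))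
      = (2 * a * T + 1 - Real.exp (-2 * a * T) * (2 * a * T + 1)) / (2 * a * T) := by
    field_simp
    ring
  rw [h3, le_div_iff₀ hx]
  linarith

/-- `sinh s / s` is increasing on `s > 0`, cross-multiplied and evaluated at `a * T` and `b * T`. -/
theorem mul_sinh_le_mul_sinh {a b T : ℝ} (ha : 0 < a) (hab : a ≤ b) (hT : 0 < T) :
    b * Real.sinh (a * T) ≤ a * Real.sinh (b * T) := by
  have hd : ∀ t : ℝ, HasDerivAt (fun t => a * Real.sinh (b * t) - b * Real.sinh (a * t))
      (a * (Real.cosh (b * t) * b) - b * (Real.cosh (a * t) * a)) t := by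
    intro t
    have h1 : HasDerivAt (fun t : ℝ => b * t) b t := by
      simpa using (hasDerivAt_id t).const_mul b
    have h2 : HasDerivAt (fun t : ℝ => a * t) a t := by
      simpa using (hasDerivAt_id t).const_mul a
    exact (h1.sinh.const_mul a).sub (h2.sinh.const_mul b)
  have hm : MonotoneOn (fun t => a * Real.sinh (b * t) - b * Real.sinh (a * t)) (Set.Ici 0) := by
    refine monotoneOn_of_deriv_nonneg (convex_Ici 0)
      (fun t _ => (hd t).continuousAt.continuousWithinAt)
      (fun t _ => (hd t).differentiableAt.differentiableWithinAt) ?_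
    intro t ht
    rw [interior_Ici] at ht
    have ht0 : 0 < t := ht
    rw [(hd t).deriv]
    have hc : Real.cosh (a * t) ≤ Real.cosh (b * t) := by
      rw [Real.cosh_le_cosh, abs_of_pos (by positivity), abs_of_pos (by nlinarith)]
      nlinarith
    nlinarith [mul_le_mul_of_nonneg_left hc (mul_pos ha (ha.trans_le hab)).le]
  have h := hm (Set.mem_Ici.mpr le_rfl) (Set.mem_Ici.mpr hT.le) hT.le
  simp at h
  linarith

theorem one_sub_exp_eq_sinh (a T : ℝ) :
    1 - Real.exp (-2 * a * T) = 2 * Real.exp (-(a * T)) * Real.sinh (a * T) := by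
  have h1 : Real.exp (-(a * T)) * Real.exp (a * T) = 1 := by
    rw [← Real.exp_add, neg_add_cancel, Real.exp_zero]
  have h2 : Real.exp (-2 * a * T) = Real.exp (-(a * T)) * Real.exp (-(a * T)) := by
    rw [← Real.exp_add]
    congr 1
    ring
  rw [Real.sinh_eq, h2]
  linear_combination -h1

theorem hasDerivAt_inv_one_sub_exp {a T : ℝ} (ha : 0 < a) (hT : 0 < T) :
    HasDerivAt (fun T => 1 / (1 - Real.exp (-2 * a * T)))
      (-(a / (2 * Real.sinh (a * T) ^ 2))) T := by
  have h1 : HasDerivAt (fun t : ℝ => -2 * a * t) (-2 * a) T := by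
    simpa using (hasDerivAt_id T).const_mul (-2 * a)
  have h2 := ((h1.exp).const_sub 1).inv (one_sub_exp_pos ha hT).ne'
  simp only [one_div]
  refine h2.congr_deriv ?_
  have hs : 0 < Real.sinh (a * T) := Real.sinh_pos_iff.mpr (by positivity)
  have he := Real.exp_pos (-(a * T))
  have h3 : Real.exp (-2 * a * T) = Real.exp (-(a * T)) ^ 2 := by
    rw [sq, ← Real.exp_add]
    congr 1
    ring
  rw [one_sub_exp_eq_sinh, h3]
  field_simp

/-- The difference of the two sides, in the form `A α (g_α + 1) - B β g_β` with
`A = 1 / lam ^ 2`, `B = 1 / mu ^ 2` and `g_a T = 1 / (1 - exp (-2 a T))`, is strictly decreasing. -/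
theorem strictAntiOn_gap {α β A B : ℝ} (hα : 0 < α) (hαβ : α ≤ β) (hB : 0 < B) (hBA : B < A) :
    StrictAntiOn (fun T => A * α * (1 / (1 - Real.exp (-2 * α * T)) + 1)
      - B * β * (1 / (1 - Real.exp (-2 * β * T)))) (Set.Ioi 0) ∧
    ContinuousOn (fun T => A * α * (1 / (1 - Real.exp (-2 * α * T)) + 1)
      - B * β * (1 / (1 - Real.exp (-2 * β * T)))) (Set.Ioi 0) := by
  have hβ : 0 < β := hα.trans_le hαβ
  have hd : ∀ T : ℝ, 0 < T → HasDerivAt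
      (fun T => A * α * (1 / (1 - Real.exp (-2 * α * T)) + 1)
        - B * β * (1 / (1 - Real.exp (-2 * β * T))))
      (A * α * (-(α / (2 * Real.sinh (α * T) ^ 2)))
        - B * β * (-(β / (2 * Real.sinh (β * T) ^ 2)))) T := fun T hT =>
    (((hasDerivAt_inv_one_sub_exp hα hT).add_const 1).const_mul (A * α)).sub
      ((hasDerivAt_inv_one_sub_exp hβ hT).const_mul (B * β))
  have hc : ContinuousOn (fun T => A * α * (1 / (1 - Real.exp (-2 * α * T)) + 1)
      - B * β * (1 / (1 - Real.exp (-2 * β * T)))) (Set.Ioi 0) :=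
    fun T hT => (hd T hT).continuousAt.continuousWithinAt
  refine ⟨strictAntiOn_of_deriv_neg (convex_Ioi 0) hc ?_, hc⟩
  intro T hT
  rw [interior_Ioi] at hT
  have hT0 : 0 < T := hT
  rw [(hd T hT0).deriv]
  have hs : 0 < Real.sinh (α * T) := Real.sinh_pos_iff.mpr (by positivity)
  have hs' : 0 < Real.sinh (β * T) := Real.sinh_pos_iff.mpr (by positivity)
  have hq : β / Real.sinh (β * T) ≤ α / Real.sinh (α * T) := by
    rw [div_le_div_iff₀ hs' hs]
    exact mul_sinh_le_mul_sinh hα hαβ hT0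
  have hq0 : 0 < β / Real.sinh (β * T) := by positivity
  have hsq : (β / Real.sinh (β * T)) ^ 2 ≤ (α / Real.sinh (α * T)) ^ 2 :=
    pow_le_pow_left₀ hq0.le hq 2
  have hlt : B * (β / Real.sinh (β * T)) ^ 2 < A * (α / Real.sinh (α * T)) ^ 2 :=
    mul_lt_mul hBA hsq (by positivity) (hB.trans hBA).le
  have e : A * α * (-(α / (2 * Real.sinh (α * T) ^ 2)))
      - B * β * (-(β / (2 * Real.sinh (β * T) ^ 2)))
      = (B * (β / Real.sinh (β * T)) ^ 2 - A * (α / Real.sinh (α * T)) ^ 2) / 2 := by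
    field_simp
    ring
  rw [e]
  linarith


/-- Let `α > 0`, `0 < λ < μ`, and `β > 0` with `2α/λ² < β/μ²`. Then there is a
unique `T* > 0` with `α/(λ²(1 - e^{-2αT*})) + α/λ² = β/(μ²(1 - e^{-2βT*}))`;
moreover the left-hand side is `>` the right-hand side for `0 < T < T*` and
`<` it for `T > T*`. -/
theorem stmt_7 (α β lam mu : ℝ) (hα : 0 < α) (hβ : 0 < β)
    (hlam : 0 < lam) (hlm : lam < mu)
    (hgap : 2 * α / lam ^ 2 < β / mu ^ 2) :
    ∃ Tstar : ℝ, 0 < Tstar ∧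
      (α / (lam ^ 2 * (1 - Real.exp (-2 * α * Tstar))) + α / lam ^ 2 =
        β / (mu ^ 2 * (1 - Real.exp (-2 * β * Tstar)))) ∧
      (∀ T : ℝ, 0 < T →
        (α / (lam ^ 2 * (1 - Real.exp (-2 * α * T))) + α / lam ^ 2 =
          β / (mu ^ 2 * (1 - Real.exp (-2 * β * T)))) → T = Tstar) ∧
      (∀ T : ℝ, 0 < T → T < Tstar →
        α / (lam ^ 2 * (1 - Real.exp (-2 * α * T))) + α / lam ^ 2 >
          β / (mu ^ 2 * (1 - Real.exp (-2 * β * T)))) ∧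
      (∀ T : ℝ, Tstar < T →
        α / (lam ^ 2 * (1 - Real.exp (-2 * α * T))) + α / lam ^ 2 <
          β / (mu ^ 2 * (1 - Real.exp (-2 * β * T)))) := by
  have hmu : 0 < mu := hlam.trans hlm
  obtain ⟨A, hA⟩ : ∃ A, A = 1 / lam ^ 2 := ⟨_, rfl⟩
  obtain ⟨B, hB⟩ : ∃ B, B = 1 / mu ^ 2 := ⟨_, rfl⟩
  have hB0 : 0 < B := by rw [hB]; positivity
  have hBA : B < A := by
    rw [hA, hB]
    exact one_div_lt_one_div_of_lt (by positivity) (by gcongr)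
  have hA0 : 0 < A := hB0.trans hBA
  have hgap' : 2 * (A * α) < B * β := by
    have e1 : 2 * (A * α) = 2 * α / lam ^ 2 := by rw [hA]; ring
    have e2 : B * β = β / mu ^ 2 := by rw [hB]; ring
    rw [e1, e2]
    exact hgap
  have hαβ : α ≤ β := by
    by_contra! h
    nlinarith [mul_pos hA0 hα, mul_lt_mul_of_pos_right hBA hβ, mul_lt_mul_of_pos_left h hA0]
  have hL : ∀ T, α / (lam ^ 2 * (1 - Real.exp (-2 * α * T))) + α / lam ^ 2
      = A * α * (1 / (1 - Real.exp (-2 * α * T)) + 1) := by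
    intro T
    rw [hA, div_mul_eq_div_div]
    ring
  have hR : ∀ T, β / (mu ^ 2 * (1 - Real.exp (-2 * β * T)))
      = B * β * (1 / (1 - Real.exp (-2 * β * T))) := by
    intro T
    rw [hB, div_mul_eq_div_div]
    ring
  simp only [hL, hR]
  obtain ⟨hanti, hcont⟩ := strictAntiOn_gap hα hαβ hB0 hBA
  set f : ℝ → ℝ := fun T => A * α * (1 / (1 - Real.exp (-2 * α * T)) + 1)
      - B * β * (1 / (1 - Real.exp (-2 * β * T))) with hf
  -- For small `T` the difference is at least `(A - B) / (2 T) + A α - B β`;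
  -- this `T` turns the first term into `B β`.
  have hpos : ∃ T ∈ Set.Ioi (0 : ℝ), 0 < f T := by
    have hT : 0 < (A - B) / (2 * (B * β)) := div_pos (by linarith) (by positivity)
    refine ⟨_, hT, ?_⟩
    obtain ⟨T, hTe⟩ : ∃ T, T = (A - B) / (2 * (B * β)) := ⟨_, rfl⟩
    rw [← hTe] at hT ⊢
    have h1 := mul_le_mul_of_nonneg_left (inv_one_sub_exp_lower hα hT) (mul_pos hA0 hα).le
    have h2 := mul_le_mul_of_nonneg_left (inv_one_sub_exp_upper hβ hT) (mul_pos hB0 hβ).le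
    have e1 : A * α * (1 / (2 * α * T)) = A / (2 * T) := by field_simp
    have e2 : B * β * (1 / (2 * β * T) + 1) = B / (2 * T) + B * β := by field_simp
    have e3 : A / (2 * T) - B / (2 * T) = B * β := by
      rw [← sub_div, div_eq_iff (by positivity), hTe]
      field_simp
    simp only [hf]
    nlinarith [mul_pos hA0 hα]
  -- For large `T` the difference is at most `A / (2 T) - (B β - 2 A α)`;
  -- this `T` turns the first term into half of the second.
  have hneg : ∃ T ∈ Set.Ioi (0 : ℝ), f T < 0 := by
    have hT : 0 < A / (B * β - 2 * (A * α)) := div_pos hA0 (by linarith)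
    refine ⟨_, hT, ?_⟩
    obtain ⟨T, hTe⟩ : ∃ T, T = A / (B * β - 2 * (A * α)) := ⟨_, rfl⟩
    rw [← hTe] at hT ⊢
    have h1 := mul_le_mul_of_nonneg_left (inv_one_sub_exp_upper hα hT) (mul_pos hA0 hα).le
    have h2 := mul_le_mul_of_nonneg_left (one_le_inv_one_sub_exp hβ hT) (mul_pos hB0 hβ).le
    have e1 : A * α * (1 / (2 * α * T) + 1) = A / (2 * T) + A * α := by field_simp
    have e3 : A / (2 * T) = (B * β - 2 * (A * α)) / 2 := by
      have h0 : B * β - 2 * (A * α) ≠ 0 := by linarith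
      have hm : T * (B * β - 2 * (A * α)) = A := by
        rw [hTe]
        exact div_mul_cancel₀ _ h0
      rw [div_eq_iff (by positivity)]
      linear_combination -hm
    simp only [hf]
    linarith
  obtain ⟨T₁, hT₁, hp⟩ := hpos
  obtain ⟨T₂, hT₂, hn⟩ := hneg
  obtain ⟨S, hS, hS0⟩ := isPreconnected_Ioi.intermediate_value hT₂ hT₁ hcont
    (Set.mem_Icc.mpr ⟨hn.le, hp.le⟩)
  have hSpos : 0 < S := hS
  refine ⟨S, hSpos, sub_eq_zero.mp hS0, ?_, ?_, ?_⟩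
  · intro T hT h
    exact hanti.injOn hT hS ((sub_eq_zero.mpr h).trans hS0.symm)
  · intro T hT hTS
    have h := hanti hT hS hTS
    rw [hS0] at h
    exact sub_pos.mp h
  · intro T hTS
    have h := hanti hS (hSpos.trans hTS) hTS
    rw [hS0] at h
    exact sub_neg.mp h
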